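/- arXiv:2307.16128 — 2 statements merged into one kernel-verified Lean document; each statement's English description precedes it below -/
import Mathlib

section
/- Let S ⊆ ℝⁿ be a convex set, let D be a map from S to real symmetric positive definite n×n matrices satisfying the self-concordance inequality on S, and let r : ℝⁿ → ℝⁿ be a map. Let y ∈ S, set n(y) := −D(y)⁻¹ r(y), y⁺ := y + n(y), n(y⁺) := −D(y⁺)⁻¹ r(y⁺), and δ := ‖n(y)‖_{D(y)}. If δ < 1 and y⁺ ∈ S, then ‖n(y⁺)‖_{D(y⁺)} ≤ ‖D(y)⁻¹ r(y⁺)‖_{D(y)} / (1 − δ). -/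
/-!
The self-concordance inequality bounds `D y` by `D x` from above, whereas comparing `D(y)⁻¹ w` with
`D(x)⁻¹ w` needs the converse bound `(1 - δ) ‖v‖_{D(x)} ≤ ‖v‖_{D(y)}`. Applying the inequality once
from `y` back to `x` is too lossy, since `‖x - y‖_{D(y)}` is only known to be at most `δ / (1 - δ)`.
Instead one goes from `x` to `y` in `N` equal steps and applies the inequality backwards on each of
them: with `d = δ / N`, step `k` costs a factor `(1 - (k + 2) d) / (1 - (k + 1) d)`, the product
telescopes to `(1 - (N + 1) d) / (1 - d)`, and `N → ∞` gives `1 - δ`. The bound then passes to the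
inverses because, by Cauchy–Schwarz, `w ↦ ‖H⁻¹ w‖_H` is the dual norm of `‖·‖_H`.
-/

open Matrix

/-- The Hessian norm `‖z‖_H = √(zᵀ H z)` associated with a matrix `H`. -/
noncomputable def hnorm {ι : Type*} [Fintype ι] (H : Matrix ι ι ℝ) (z : ι → ℝ) : ℝ :=
  Real.sqrt (z ⬝ᵥ H.mulVec z)

/-- A matrix-valued map `D` satisfies the self-concordance inequality on `S`. -/
def SelfConcordantOn {n : ℕ} (S : Set (Fin n → ℝ))
    (D : (Fin n → ℝ) → Matrix (Fin n) (Fin n) ℝ) : Prop :=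
  ∀ y₁ ∈ S, ∀ y₂ ∈ S, hnorm (D y₁) (y₂ - y₁) < 1 →
    ∀ v : Fin n → ℝ, hnorm (D y₂) v ≤ hnorm (D y₁) v / (1 - hnorm (D y₁) (y₂ - y₁))

theorem mulVec_inv_mulVec {ι R : Type*} [Fintype ι] [DecidableEq ι] [CommRing R]
    {A : Matrix ι ι R} (hA : IsUnit A) (w : ι → R) : A *ᵥ (A⁻¹ *ᵥ w) = w := by
  rw [mulVec_mulVec, mul_nonsing_inv _ ((isUnit_iff_isUnit_det A).1 hA), one_mulVec]

section HessianNorm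

variable {ι : Type*} [Fintype ι]

theorem hnorm_nonneg (H : Matrix ι ι ℝ) (z : ι → ℝ) : 0 ≤ hnorm H z :=
  Real.sqrt_nonneg _

theorem hnorm_smul (H : Matrix ι ι ℝ) (c : ℝ) (z : ι → ℝ) : hnorm H (c • z) = |c| * hnorm H z := by
  unfold hnorm
  rw [mulVec_smul, dotProduct_smul, smul_dotProduct, smul_eq_mul, smul_eq_mul, ← mul_assoc,
    Real.sqrt_mul (mul_self_nonneg c), Real.sqrt_mul_self_eq_abs]

theorem hnorm_neg (H : Matrix ι ι ℝ) (z : ι → ℝ) : hnorm H (-z) = hnorm H z := by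
  simpa using hnorm_smul H (-1) z

theorem sq_hnorm {H : Matrix ι ι ℝ} (hH : H.PosSemidef) (z : ι → ℝ) :
    hnorm H z ^ 2 = z ⬝ᵥ H *ᵥ z :=
  Real.sq_sqrt (by simpa using hH.dotProduct_mulVec_nonneg z)

theorem dotProduct_mulVec_le_hnorm_mul_hnorm {H : Matrix ι ι ℝ} (hH : H.PosSemidef)
    (z w : ι → ℝ) : z ⬝ᵥ H *ᵥ w ≤ hnorm H z * hnorm H w := by
  classical
  have cauchy_schwarz : (z ⬝ᵥ H *ᵥ w) ^ 2 ≤ (z ⬝ᵥ H *ᵥ z) * (w ⬝ᵥ H *ᵥ w) := by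
    have hsymm : H.toBilin'.IsSymm := isSymm_toBilin'_iff_isSymm.2 (by simpa using hH.isHermitian)
    have hnonneg (v : ι → ℝ) : 0 ≤ H.toBilin' v v := by
      simpa [toBilin'_apply'] using hH.dotProduct_mulVec_nonneg v
    simpa only [toBilin'_apply'] using H.toBilin'.apply_sq_le_of_symm hnonneg
      (LinearMap.BilinForm.isSymm_iff.1 hsymm) z w
  rw [← sq_hnorm hH, ← sq_hnorm hH, ← mul_pow] at cauchy_schwarz
  exact le_of_sq_le_sq cauchy_schwarz (mul_nonneg (hnorm_nonneg H z) (hnorm_nonneg H w))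

theorem mul_hnorm_inv_mulVec_le [DecidableEq ι] {A B : Matrix ι ι ℝ} (hA : A.PosDef)
    (hB : B.PosDef) {c : ℝ} (hc : 0 ≤ c) (hAB : ∀ v, c * hnorm A v ≤ hnorm B v) (w : ι → ℝ) :
    c * hnorm B (B⁻¹ *ᵥ w) ≤ hnorm A (A⁻¹ *ᵥ w) := by
  set a := A⁻¹ *ᵥ w with ha
  set b := B⁻¹ *ᵥ w with hb
  have b_sq_le : hnorm B b ^ 2 ≤ hnorm A b * hnorm A a := calc
    hnorm B b ^ 2 = b ⬝ᵥ A *ᵥ a := by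
      rw [sq_hnorm hB.posSemidef, ha, hb, mulVec_inv_mulVec hA.isUnit,
        mulVec_inv_mulVec hB.isUnit]
    _ ≤ hnorm A b * hnorm A a := dotProduct_mulVec_le_hnorm_mul_hnorm hA.posSemidef b a
  rcases (hnorm_nonneg B b).eq_or_lt with b_zero | b_pos
  · simpa [← b_zero] using hnorm_nonneg A a
  · refine le_of_mul_le_mul_left ?_ b_pos
    calc hnorm B b * (c * hnorm B b) = c * hnorm B b ^ 2 := by ring
      _ ≤ c * (hnorm A b * hnorm A a) := by gcongr
      _ = c * hnorm A b * hnorm A a := by ring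
      _ ≤ hnorm B b * hnorm A a := by gcongr; exacts [hnorm_nonneg A a, hAB b]

end HessianNorm

namespace SelfConcordantOn

open Filter Topology

variable {n : ℕ} {S : Set (Fin n → ℝ)} {D : (Fin n → ℝ) → Matrix (Fin n) (Fin n) ℝ}
  {x y p : Fin n → ℝ}

theorem hnorm_add_smul_le (hSC : SelfConcordantOn S D) {t : ℝ} (hx : x ∈ S) (hxt : x + t • p ∈ S)
    (ht : |t| * hnorm (D x) p < 1) (v : Fin n → ℝ) :
    hnorm (D (x + t • p)) v ≤ hnorm (D x) v / (1 - |t| * hnorm (D x) p) := by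
  have h := hSC x hx (x + t • p) hxt
  rw [add_sub_cancel_left, hnorm_smul] at h
  exact h ht v

theorem hnorm_sub_mul_le (hSC : SelfConcordantOn S D) {t : ℝ} (ht : 0 ≤ t) (hx : x ∈ S)
    (hxt : x + t • p ∈ S) (hxt' : x + t • p - p ∈ S) (hlt : (t + 1) * hnorm (D x) p < 1)
    (v : Fin n → ℝ) :
    hnorm (D (x + t • p - p)) v * (1 - (t + 1) * hnorm (D x) p) ≤
      hnorm (D (x + t • p)) v * (1 - t * hnorm (D x) p) := by
  have hd : 0 ≤ hnorm (D x) p := hnorm_nonneg _ _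
  have hpos : 0 < 1 - t * hnorm (D x) p := by linarith
  have step_length_le : hnorm (D (x + t • p)) p ≤ hnorm (D x) p / (1 - t * hnorm (D x) p) := by
    simpa [abs_of_nonneg ht] using
      hSC.hnorm_add_smul_le hx hxt (by rw [abs_of_nonneg ht]; linarith) p
  have step_length_lt_one : hnorm (D (x + t • p)) p < 1 :=
    step_length_le.trans_lt ((div_lt_one hpos).2 (by linarith))
  have backward_step : hnorm (D (x + t • p - p)) v * (1 - hnorm (D (x + t • p)) p) ≤
      hnorm (D (x + t • p)) v := by
    rw [← le_div_iff₀ (by linarith)]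
    simpa [← sub_eq_add_neg] using hSC.hnorm_add_smul_le (t := -1) hxt
      (by simpa [← sub_eq_add_neg] using hxt') (by simpa using step_length_lt_one) v
  calc hnorm (D (x + t • p - p)) v * (1 - (t + 1) * hnorm (D x) p)
      = hnorm (D (x + t • p - p)) v * (1 - hnorm (D x) p / (1 - t * hnorm (D x) p)) *
          (1 - t * hnorm (D x) p) := by field_simp; ring
    _ ≤ hnorm (D (x + t • p - p)) v * (1 - hnorm (D (x + t • p)) p) *
          (1 - t * hnorm (D x) p) := by gcongr; exact hnorm_nonneg _ _
    _ ≤ hnorm (D (x + t • p)) v * (1 - t * hnorm (D x) p) := by gcongr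

theorem hnorm_mul_le_hnorm_add_natCast_smul (hSC : SelfConcordantOn S D) {N : ℕ}
    (hmem : ∀ k ≤ N, x + (k : ℝ) • p ∈ S) (hN : (N + 1) * hnorm (D x) p < 1) (v : Fin n → ℝ) :
    hnorm (D x) v * (1 - (N + 1) * hnorm (D x) p) ≤
      hnorm (D (x + (N : ℝ) • p)) v * (1 - hnorm (D x) p) := by
  set d := hnorm (D x) p
  have hd : 0 ≤ d := hnorm_nonneg _ _
  have denom_pos : ∀ k ≤ N, 0 < 1 - ((k : ℝ) + 1) * d := fun k hk ↦ by
    have : ((k : ℝ) + 1) * d ≤ (N + 1) * d := by gcongr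
    linarith
  have telescope :
      MonotoneOn (fun k : ℕ ↦ hnorm (D (x + (k : ℝ) • p)) v / (1 - (k + 1) * d)) (Set.Iic N) := by
    refine monotoneOn_of_le_add_one Set.ordConnected_Iic fun k _ hk hk' ↦ ?_
    have hsub : x + ((k + 1 : ℕ) : ℝ) • p - p = x + (k : ℝ) • p := by push_cast; module
    have hstep := hSC.hnorm_sub_mul_le (p := p) (Nat.cast_nonneg (k + 1))
      (by simpa using hmem 0 N.zero_le) (hmem (k + 1) hk') (hsub ▸ hmem k hk)
      (by linarith [denom_pos (k + 1) hk']) v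
    rw [hsub] at hstep
    rw [div_le_div_iff₀ (denom_pos k hk) (denom_pos (k + 1) hk')]
    simpa using hstep
  have h := telescope (Set.mem_Iic.2 N.zero_le) Set.self_mem_Iic N.zero_le
  rw [div_le_div_iff₀ (denom_pos 0 N.zero_le) (denom_pos N le_rfl)] at h
  simpa using h

theorem hnorm_mul_le_of_subdivision (hSC : SelfConcordantOn S D) (hseg : segment ℝ x y ⊆ S) {N : ℕ}
    (hN : 0 < N) (hδ : (1 + 1 / (N : ℝ)) * hnorm (D x) (y - x) < 1) (v : Fin n → ℝ) :
    hnorm (D x) v * (1 - (1 + 1 / (N : ℝ)) * hnorm (D x) (y - x)) ≤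
      hnorm (D y) v * (1 - 1 / (N : ℝ) * hnorm (D x) (y - x)) := by
  have hN' : (0 : ℝ) < N := Nat.cast_pos.2 hN
  have step_length : hnorm (D x) ((1 / (N : ℝ)) • (y - x)) = 1 / (N : ℝ) * hnorm (D x) (y - x) := by
    rw [hnorm_smul, abs_of_pos (by positivity)]
  have total_length : ((N : ℝ) + 1) * (1 / N * hnorm (D x) (y - x)) =
      (1 + 1 / N) * hnorm (D x) (y - x) := by field_simp
  have points_mem : ∀ k ≤ N, x + (k : ℝ) • (1 / (N : ℝ)) • (y - x) ∈ S := fun k hk ↦ hseg <| by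
    rw [segment_eq_image']
    exact ⟨k / N, ⟨by positivity, (div_le_one hN').2 (Nat.cast_le.2 hk)⟩, by
      simp only [smul_smul, mul_one_div]⟩
  have last_point : x + (N : ℝ) • (1 / (N : ℝ)) • (y - x) = y := by
    rw [smul_smul, mul_one_div_cancel hN'.ne', one_smul, add_sub_cancel]
  have h := hSC.hnorm_mul_le_hnorm_add_natCast_smul points_mem
    (by rwa [step_length, total_length]) v
  rwa [step_length, total_length, last_point] at h

theorem one_sub_mul_hnorm_le (hSC : SelfConcordantOn S D) (hseg : segment ℝ x y ⊆ S)
    (hδ : hnorm (D x) (y - x) < 1) (v : Fin n → ℝ) :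
    (1 - hnorm (D x) (y - x)) * hnorm (D x) v ≤ hnorm (D y) v := by
  set δ := hnorm (D x) (y - x)
  have hlim := tendsto_one_div_atTop_nhds_zero_nat (𝕜 := ℝ)
  have factor_tendsto : Tendsto (fun N : ℕ ↦ (1 + 1 / (N : ℝ)) * δ) atTop (𝓝 δ) := by
    simpa using (hlim.const_add 1).mul_const δ
  have lhs_tendsto : Tendsto (fun N : ℕ ↦ hnorm (D x) v * (1 - (1 + 1 / (N : ℝ)) * δ)) atTop
      (𝓝 ((1 - δ) * hnorm (D x) v)) := by
    simpa only [mul_comm (1 - δ)] using (factor_tendsto.const_sub 1).const_mul (hnorm (D x) v)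
  have rhs_tendsto : Tendsto (fun N : ℕ ↦ hnorm (D y) v * (1 - 1 / (N : ℝ) * δ)) atTop
      (𝓝 (hnorm (D y) v)) := by
    simpa using ((hlim.mul_const δ).const_sub 1).const_mul (hnorm (D y) v)
  refine le_of_tendsto_of_tendsto lhs_tendsto rhs_tendsto ?_
  filter_upwards [factor_tendsto.eventually_lt_const hδ, eventually_gt_atTop 0] with N hlt hN
  exact hSC.hnorm_mul_le_of_subdivision hseg hN hlt v

end SelfConcordantOn

theorem stmt_2_general {n : ℕ} {S : Set (Fin n → ℝ)}
    {D : (Fin n → ℝ) → Matrix (Fin n) (Fin n) ℝ} (hSC : SelfConcordantOn S D)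
    {x y : Fin n → ℝ} (hseg : segment ℝ x y ⊆ S) (hx : (D x).PosDef) (hy : (D y).PosDef)
    (hδ : hnorm (D x) (y - x) < 1) (w : Fin n → ℝ) :
    hnorm (D y) ((D y)⁻¹ *ᵥ w) ≤ hnorm (D x) ((D x)⁻¹ *ᵥ w) / (1 - hnorm (D x) (y - x)) := by
  rw [le_div_iff₀' (sub_pos.2 hδ)]
  exact mul_hnorm_inv_mulVec_le hx hy (sub_pos.2 hδ).le (hSC.one_sub_mul_hnorm_le hseg hδ) w

theorem stmt_2 {n : ℕ} (S : Set (Fin n → ℝ)) (hS : Convex ℝ S)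
    (D : (Fin n → ℝ) → Matrix (Fin n) (Fin n) ℝ)
    (hPD : ∀ y ∈ S, (D y).PosDef)
    (hSC : SelfConcordantOn S D)
    (r : (Fin n → ℝ) → (Fin n → ℝ))
    (y : Fin n → ℝ) (hy : y ∈ S)
    -- `n(y) := −D(y)⁻¹ r(y)`, `y⁺ := y + n(y)`, `δ := ‖n(y)‖_{D(y)}`
    (hδ : hnorm (D y) (-(D y)⁻¹.mulVec (r y)) < 1)
    (hyp : y + -(D y)⁻¹.mulVec (r y) ∈ S) :
    hnorm (D (y + -(D y)⁻¹.mulVec (r y)))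
        (-(D (y + -(D y)⁻¹.mulVec (r y)))⁻¹.mulVec (r (y + -(D y)⁻¹.mulVec (r y)))) ≤
      hnorm (D y) ((D y)⁻¹.mulVec (r (y + -(D y)⁻¹.mulVec (r y)))) /
        (1 - hnorm (D y) (-(D y)⁻¹.mulVec (r y))) := by
  rw [hnorm_neg]
  simpa using stmt_2_general hSC (hS.segment_subset hy hyp) (hPD y hy) (hPD _ hyp)
    (by simpa using hδ) (r (y + -(D y)⁻¹.mulVec (r y)))
end

section
/- (Epsilon-regret bound of εOIPM-TEC) Let N ∈ ℕ, c ∈ ℝᴺ, v > 0, η > 0 and ε > 0 with η ≥ 11 v / (5 ε). Let (x_t)_{t=1}^{T} and (x*_t)_{t=0}^{T} be sequences in ℝᴺ such that cᵀ(x_t − x*_{t−1}) ≤ 11 v / (5 η) for every t = 1, …, T. Then the epsilon-regret satisfies Σ_{t=1}^{T} max(cᵀ(x_t − x*_t) − ε, 0) ≤ ‖c‖ · Σ_{t=1}^{T} ‖x*_{t−1} − x*_t‖, where ‖·‖ is the Euclidean norm. -/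
open Matrix

/-- The Euclidean norm of a vector. -/
noncomputable def euclNorm {ι : Type*} [Fintype ι] (z : ι → ℝ) : ℝ :=
  Real.sqrt (z ⬝ᵥ z)

/-!
Splitting `x t - xs t = (x t - xs (t - 1)) + (xs (t - 1) - xs t)`, the tolerance `ε` absorbs the
first part, which is at most `11 v / (5 η) ≤ ε`, so round `t` contributes at most
`‖c‖ * ‖xs (t - 1) - xs t‖`. Only the operator norm bound for `c` enters, so any norm will do as
long as `c` is measured in the dual norm; for the Euclidean norm the two coincide by Riesz.
-/

section NormedSpace

variable {E : Type*} [SeminormedAddCommGroup E] [NormedSpace ℝ E]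

theorem max_apply_sub_sub_le_norm_mul_norm_sub (f : StrongDual ℝ E) {x y z : E} {ε : ℝ}
    (hxy : f (x - y) ≤ ε) : max (f (x - z) - ε) 0 ≤ ‖f‖ * ‖y - z‖ := by
  refine max_le ?_ (by positivity)
  calc f (x - z) - ε = f (x - y) - ε + f (y - z) := by simp only [map_sub]; ring
    _ ≤ f (y - z) := add_le_of_nonpos_left (sub_nonpos.2 hxy)
    _ ≤ ‖f (y - z)‖ := Real.le_norm_self _
    _ ≤ ‖f‖ * ‖y - z‖ := f.le_opNorm _

theorem sum_max_apply_sub_sub_le_norm_mul_sum_norm_sub {ι : Type*} {s : Finset ι}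
    (f : StrongDual ℝ E) {x y z : ι → E} {ε : ℝ} (hxy : ∀ i ∈ s, f (x i - y i) ≤ ε) :
    ∑ i ∈ s, max (f (x i - z i) - ε) 0 ≤ ‖f‖ * ∑ i ∈ s, ‖y i - z i‖ := by
  rw [Finset.mul_sum]
  exact Finset.sum_le_sum fun i hi ↦ max_apply_sub_sub_le_norm_mul_norm_sub f (hxy i hi)

theorem stmt_17_general (T : ℕ) (c : StrongDual ℝ E) {v η ε : ℝ} (hη : 0 < η) (hε : 0 < ε)
    (hηε : η ≥ 11 * v / (5 * ε)) (x xs : ℕ → E)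
    (htrack : ∀ t ∈ Finset.Icc 1 T, c (x t - xs (t - 1)) ≤ 11 * v / (5 * η)) :
    ∑ t ∈ Finset.Icc 1 T, max (c (x t - xs t) - ε) 0 ≤
      ‖c‖ * ∑ t ∈ Finset.Icc 1 T, ‖xs (t - 1) - xs t‖ := by
  have hgap : 11 * v / (5 * η) ≤ ε := by
    rwa [ge_iff_le, ← div_div, div_le_comm₀ hε hη, div_div] at hηε
  exact sum_max_apply_sub_sub_le_norm_mul_sum_norm_sub c fun t ht ↦ (htrack t ht).trans hgap

end NormedSpace

section Euclidean

variable {ι : Type*} [Fintype ι]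

theorem innerSL_toLp_apply_toLp (c z : ι → ℝ) :
    innerSL ℝ (WithLp.toLp 2 c) (WithLp.toLp 2 z) = c ⬝ᵥ z := by
  rw [innerSL_apply_apply, EuclideanSpace.inner_toLp_toLp, star_trivial, dotProduct_comm]

theorem norm_toLp_eq_euclNorm (z : ι → ℝ) : ‖WithLp.toLp 2 z‖ = euclNorm z := by
  rw [norm_eq_sqrt_real_inner, ← innerSL_apply_apply ℝ, innerSL_toLp_apply_toLp, euclNorm]

end Euclidean

/-- Epsilon-regret bound of εOIPM-TEC. -/
theorem stmt_17 {N : ℕ} (T : ℕ)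
    (c : Fin N → ℝ) (v η ε : ℝ) (hv : 0 < v) (hη : 0 < η) (hε : 0 < ε)
    (hηε : η ≥ 11 * v / (5 * ε))
    (x : ℕ → Fin N → ℝ) (xs : ℕ → Fin N → ℝ)
    (htrack : ∀ t ∈ Finset.Icc 1 T,
      c ⬝ᵥ (x t - xs (t - 1)) ≤ 11 * v / (5 * η)) :
    (∑ t ∈ Finset.Icc 1 T, max (c ⬝ᵥ (x t - xs t) - ε) 0) ≤
      euclNorm c * (∑ t ∈ Finset.Icc 1 T, euclNorm (xs (t - 1) - xs t)) := by
  simp only [← innerSL_toLp_apply_toLp, ← norm_toLp_eq_euclNorm, WithLp.toLp_sub] at htrack ⊢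
  simpa only [innerSL_apply_norm] using stmt_17_general T (innerSL ℝ (WithLp.toLp 2 c)) hη hε hηε
    (fun t ↦ WithLp.toLp 2 (x t)) (fun t ↦ WithLp.toLp 2 (xs t)) htrack
end
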